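/- Let m ≥ 1 and suppose that q ≠ −a/b for all integers a, b with 1 ≤ a ≤ 2 ≤ b (equivalently, a + q·b ≠ 0 for all such a, b). Then the 2m² polynomials {x^α y^β : 0 ≤ α < m, 0 ≤ β < m} ∪ {⟨β+m⟩_m · x^{α+m} y^β − ⟨α+m⟩_m · x^α y^{β+m} : 0 ≤ α < m, 0 ≤ β < m} form a K-basis of the space H_q(G(m,2)) := {f ∈ K[x,y] : D_{q,m} f = 0, D_{q,2m} f = 0} of q-harmonic polynomials for G(m,2). In particular this space has dimension 2m², the dimension of the regular representation of G(m,2). -/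

import Mathlib

/-!
In terms of the coefficients `c(i, j)` of `f`, the equation `D_{q,k} f = 0` says
`⟨i+k⟩_k c(i+k, j) + ⟨j+k⟩_k c(i, j+k) = 0` for all `i, j`. Multiply the equation `D_{q,2m} f = 0`
at `(i, j)` by `(1 + q(i+m))(1 + q(j+m))` and use `D_{q,m} f = 0` at `(i+m, j)` and `(i, j+m)` to
express `c(i+2m, j)` and `c(i, j+2m)` through `c(i+m, j+m)`: because
`(1 + q(a+m)) ⟨a+2m⟩_{2m} = ⟨a+m⟩_m ⟨a+2m⟩_m`, what remains is
`(2 + q(i+j+2m)) ⟨i+m⟩_m ⟨j+m⟩_m c(i+m, j+m) = 0`. Hence `c(i+m, j+m) = 0`, and then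
`D_{q,m} f = 0` forces `c(i+2m, j) = c(i, j+2m) = 0` and determines `c(i, j+m)` from `c(i+m, j)`.
So the coefficients `c(i, j)` and `c(i+m, j)` with `i, j < m` determine `f`, and, after rescaling,
these coordinate functionals are dual to the proposed basis.
-/

open MvPolynomial

/-- The deformed operator `D_{q,k} = (1 + q x∂_x)∂_x^k + (1 + q y∂_y)∂_y^k` on `K[x,y]`,
with `x = X 0` and `y = X 1`. -/
noncomputable def D2 {K : Type*} [Field K] (q : K) (k : ℕ) :
    Module.End K (MvPolynomial (Fin 2) K) :=
  (1 + q • (LinearMap.mulLeft K (X 0) * (pderiv 0).toLinearMap)) *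
      ((pderiv (0 : Fin 2)).toLinearMap : Module.End K (MvPolynomial (Fin 2) K)) ^ k
    + (1 + q • (LinearMap.mulLeft K (X 1) * (pderiv 1).toLinearMap)) *
        ((pderiv (1 : Fin 2)).toLinearMap : Module.End K (MvPolynomial (Fin 2) K)) ^ k

/-- The deformed Pochhammer symbol `⟨d⟩_k = d(d-1)⋯(d-k+1)(1 + q(d-k))`. -/
noncomputable def tp {K : Type*} [Field K] (q : K) (d k : ℕ) : K :=
  (∏ i ∈ Finset.range k, ((d : K) - (i : K))) * (1 + q * ((d : K) - (k : K)))
/-- The claimed basis of the `q`-harmonic polynomials for `G(m,2)`: the monomials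
`x^α y^β` with `0 ≤ α, β < m`, together with the binomials
`⟨β+m⟩_m x^{α+m} y^β − ⟨α+m⟩_m x^α y^{β+m}` with `0 ≤ α, β < m`. -/
noncomputable def basisGm2 {K : Type*} [Field K] (q : K) (m : ℕ) :
    (Fin m × Fin m) ⊕ (Fin m × Fin m) → MvPolynomial (Fin 2) K :=
  Sum.elim
    (fun ab => (X 0 : MvPolynomial (Fin 2) K) ^ (ab.1 : ℕ) * X 1 ^ (ab.2 : ℕ))
    (fun ab =>
      tp q ((ab.2 : ℕ) + m) m •
          ((X 0 : MvPolynomial (Fin 2) K) ^ ((ab.1 : ℕ) + m) * X 1 ^ (ab.2 : ℕ))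
        - tp q ((ab.1 : ℕ) + m) m •
            ((X 0 : MvPolynomial (Fin 2) K) ^ (ab.1 : ℕ) * X 1 ^ ((ab.2 : ℕ) + m)))

open Finsupp (single)

section Coefficients

variable {σ R : Type*} [CommSemiring R]

lemma coeff_X_mul_pderiv (i : σ) (p : MvPolynomial σ R) (s : σ →₀ ℕ) :
    coeff s (X i * pderiv i p) = s i * coeff s p := by
  classical
  induction p using MvPolynomial.induction_on' with
  | monomial t a =>
    rw [X_mul_pderiv_monomial, coeff_smul, coeff_monomial]
    split_ifs with h <;> simp [h]
  | add p p' hp hp' => rw [map_add, mul_add, coeff_add, coeff_add, hp, hp', mul_add]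

lemma coeff_pderiv_pow (i : σ) (k : ℕ) (p : MvPolynomial σ R) (s : σ →₀ ℕ) :
    coeff s ((((pderiv i).toLinearMap : Module.End R (MvPolynomial σ R)) ^ k) p)
      = (s i + 1).ascFactorial k * coeff (s + single i k) p := by
  induction k generalizing p with
  | zero => simp
  | succ k ih =>
    rw [pow_succ, Module.End.mul_apply, ih, Derivation.coeFn_coe, coeff_pderiv, add_assoc,
      ← Finsupp.single_add, Nat.ascFactorial_succ, Finsupp.add_apply, Finsupp.single_eq_same]
    push_cast
    ring

/-- The functional sending a polynomial in `x = X 0` and `y = X 1` to its coefficient of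
`x ^ i * y ^ j`. -/
noncomputable def coeffXY (i j : ℕ) : MvPolynomial (Fin 2) R →ₗ[R] R :=
  lcoeff R (single 0 i + single 1 j)

lemma coeffXY_ext {f g : MvPolynomial (Fin 2) R} (h : ∀ i j, coeffXY i j f = coeffXY i j g) :
    f = g := by
  ext s
  have hs : s = single 0 (s 0) + single 1 (s 1) := by ext t; fin_cases t <;> simp
  rw [hs]
  exact h (s 0) (s 1)

lemma coeffXY_X_pow_mul_X_pow (i j a b : ℕ) :
    coeffXY i j (X 0 ^ a * X 1 ^ b : MvPolynomial (Fin 2) R) = if a = i ∧ b = j then 1 else 0 := by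
  have hexp : (single 0 a + single 1 b : Fin 2 →₀ ℕ) = single 0 i + single 1 j ↔ a = i ∧ b = j := by
    simp [Finsupp.ext_iff, Fin.forall_fin_two]
  simp only [coeffXY, lcoeff_apply, X_pow_eq_monomial, monomial_mul, one_mul, coeff_monomial, hexp]

end Coefficients

section Pochhammer

variable {K : Type*} [Field K]

lemma tp_eq_descFactorial_mul (q : K) (d k : ℕ) :
    tp q d k = d.descFactorial k * (1 + q * (d - k)) := by
  rw [tp, ← descPochhammer_eval_eq_prod_range, descPochhammer_eval_eq_descFactorial]

lemma tp_eq_zero_of_lt (q : K) {d k : ℕ} (h : d < k) : tp q d k = 0 := by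
  rw [tp_eq_descFactorial_mul, Nat.descFactorial_of_lt h, Nat.cast_zero, zero_mul]

lemma tp_add_self (q : K) (a k : ℕ) :
    tp q (a + k) k = (a + 1).ascFactorial k * (1 + q * a) := by
  rw [tp_eq_descFactorial_mul, Nat.add_descFactorial_eq_ascFactorial, Nat.cast_add,
    add_sub_cancel_right]

lemma tp_add_self_ne_zero [CharZero K] {q : K} {a : ℕ} (ha : 1 + q * a ≠ 0) (k : ℕ) :
    tp q (a + k) k ≠ 0 := by
  rw [tp_add_self]
  exact mul_ne_zero (mod_cast (Nat.ascFactorial_pos a k).ne') ha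

lemma tp_add_self_mul_tp_add_self (q : K) (a k l : ℕ) :
    tp q (a + k) k * tp q (a + k + l) l = (1 + q * (a + k)) * tp q (a + (k + l)) (k + l) := by
  rw [tp_add_self, tp_add_self, tp_add_self, ← Nat.ascFactorial_mul_ascFactorial, add_right_comm a]
  push_cast
  ring

end Pochhammer

section Operators

variable {K : Type*} [Field K] (q : K)

/-- The summand `(1 + q x_i ∂_i) ∂_i ^ k` of the deformed operator, in any set of variables. -/
noncomputable def deformedPDeriv {σ : Type*} (i : σ) (k : ℕ) : Module.End K (MvPolynomial σ K) :=
  (1 + q • (LinearMap.mulLeft K (X i) * (pderiv i).toLinearMap)) *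
    ((pderiv i).toLinearMap : Module.End K (MvPolynomial σ K)) ^ k

lemma coeff_deformedPDeriv {σ : Type*} (i : σ) (k : ℕ) (p : MvPolynomial σ K) (s : σ →₀ ℕ) :
    coeff s (deformedPDeriv q i k p) = tp q (s i + k) k * coeff (s + single i k) p := by
  simp only [deformedPDeriv, Module.End.mul_apply, LinearMap.add_apply, Module.End.one_apply,
    LinearMap.smul_apply, LinearMap.mulLeft_apply, Derivation.coeFn_coe, coeff_add, coeff_smul,
    coeff_X_mul_pderiv, coeff_pderiv_pow, tp_add_self, smul_eq_mul]
  ring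

lemma coeffXY_D2 (k i j : ℕ) (f : MvPolynomial (Fin 2) K) :
    coeffXY i j (D2 q k f)
      = tp q (i + k) k * coeffXY (i + k) j f + tp q (j + k) k * coeffXY i (j + k) f := by
  have hD2 : D2 q k = deformedPDeriv q 0 k + deformedPDeriv q 1 k := rfl
  simp [hD2, coeffXY, coeff_deformedPDeriv, Finsupp.single_add, add_assoc, add_comm,
    add_left_comm]

lemma D2_X_pow_mul_X_pow (k a b : ℕ) :
    D2 q k (X 0 ^ a * X 1 ^ b)
      = tp q a k • (X 0 ^ (a - k) * X 1 ^ b) + tp q b k • (X 0 ^ a * X 1 ^ (b - k)) := by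
  refine coeffXY_ext fun i j => ?_
  simp only [coeffXY_D2, map_add, map_smul, coeffXY_X_pow_mul_X_pow, smul_eq_mul]
  grind [tp_eq_zero_of_lt]

end Operators

/-- The space of `q`-harmonic polynomials for `G(m,2)`. -/
noncomputable def qHarmonicGm2 {K : Type*} [Field K] (q : K) (m : ℕ) :
    Submodule K (MvPolynomial (Fin 2) K) :=
  LinearMap.ker (D2 q m) ⊓ LinearMap.ker (D2 q (2 * m))

/-- The coordinate functionals dual to `basisGm2`: the coefficients of `x ^ α * y ^ β` and the
normalised coefficients of `x ^ (α + m) * y ^ β`, for `α, β < m`. -/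
noncomputable def dualGm2 {K : Type*} [Field K] (q : K) (m : ℕ) :
    (Fin m × Fin m) ⊕ (Fin m × Fin m) → Module.Dual K (MvPolynomial (Fin 2) K) :=
  Sum.elim (fun ab => coeffXY ab.1 ab.2)
    (fun ab => (tp q (ab.2 + m) m)⁻¹ • coeffXY (ab.1 + m) ab.2)

section Harmonic

variable {K : Type*} [Field K] {q : K} {m : ℕ}

lemma basisGm2_mem_qHarmonicGm2 (s : (Fin m × Fin m) ⊕ (Fin m × Fin m)) :
    basisGm2 q m s ∈ qHarmonicGm2 q m := by
  rw [qHarmonicGm2, Submodule.mem_inf, LinearMap.mem_ker, LinearMap.mem_ker]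
  rcases s with ⟨a, b⟩ | ⟨a, b⟩
  · simp [basisGm2, D2_X_pow_mul_X_pow, tp_eq_zero_of_lt, show (a : ℕ) < 2 * m by lia,
      show (b : ℕ) < 2 * m by lia]
  · constructor
    · simp [basisGm2, D2_X_pow_mul_X_pow, tp_eq_zero_of_lt, smul_comm (tp q (a + m) m)]
    · simp [basisGm2, D2_X_pow_mul_X_pow, tp_eq_zero_of_lt, show (a : ℕ) < 2 * m by lia,
        show (b : ℕ) < 2 * m by lia, show a + m < 2 * m by lia, show b + m < 2 * m by lia]

lemma dualGm2_basisGm2 (htp : ∀ a, tp q (a + m) m ≠ 0)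
    (s t : (Fin m × Fin m) ⊕ (Fin m × Fin m)) :
    dualGm2 q m s (basisGm2 q m t) = if s = t then 1 else 0 := by
  rcases s with ⟨i, j⟩ | ⟨i, j⟩ <;> rcases t with ⟨a, b⟩ | ⟨a, b⟩ <;>
    simp only [dualGm2, basisGm2, Sum.elim_inl, Sum.elim_inr, LinearMap.smul_apply, map_sub,
      map_smul, coeffXY_X_pow_mul_X_pow, smul_eq_mul]
  all_goals grind

lemma coeffXY_relation_of_D2_eq_zero {k : ℕ} {f : MvPolynomial (Fin 2) K} (hf : D2 q k f = 0)
    (i j : ℕ) :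
    tp q (i + k) k * coeffXY (i + k) j f + tp q (j + k) k * coeffXY i (j + k) f = 0 := by
  rw [← coeffXY_D2, hf, map_zero]

lemma coeffXY_add_add_eq_zero {f : MvPolynomial (Fin 2) K} (hf : f ∈ qHarmonicGm2 q m)
    (htp : ∀ a, tp q (a + m) m ≠ 0) (hq : ∀ n : ℕ, 2 * m ≤ n → 2 + q * n ≠ 0) (i j : ℕ) :
    coeffXY (i + m) (j + m) f = 0 := by
  have hright := coeffXY_relation_of_D2_eq_zero hf.1 (i + m) j
  have hup := coeffXY_relation_of_D2_eq_zero hf.1 i (j + m)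
  have hdouble := coeffXY_relation_of_D2_eq_zero hf.2 i j
  have hi := tp_add_self_mul_tp_add_self q i m m
  have hj := tp_add_self_mul_tp_add_self q j m m
  simp only [two_mul, add_assoc] at hright hup hdouble hi hj
  have hne : (2 + q * (i + j + 2 * m : ℕ)) * tp q (i + m) m * tp q (j + m) m ≠ 0 :=
    mul_ne_zero (mul_ne_zero (hq _ (by lia)) (htp i)) (htp j)
  refine (mul_eq_zero.1 ?_).resolve_left hne
  push_cast
  linear_combination
    (1 + q * (j + m)) * tp q (i + m) m * hright + (1 + q * (i + m)) * tp q (j + m) m * hup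
      - (1 + q * (i + m)) * (1 + q * (j + m)) * hdouble
      - (1 + q * (j + m)) * coeffXY (i + (m + m)) j f * hi
      - (1 + q * (i + m)) * coeffXY i (j + (m + m)) f * hj

lemma eq_zero_of_dualGm2_eq_zero {f : MvPolynomial (Fin 2) K} (hf : f ∈ qHarmonicGm2 q m)
    (htp : ∀ a, tp q (a + m) m ≠ 0) (hq : ∀ n : ℕ, 2 * m ≤ n → 2 + q * n ≠ 0)
    (hdual : ∀ s, dualGm2 q m s f = 0) : f = 0 := by
  have hrel := coeffXY_relation_of_D2_eq_zero hf.1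
  have hcorner := coeffXY_add_add_eq_zero hf htp hq
  have hlow (i j : ℕ) (hj : j < m) : coeffXY i j f = 0 := by
    rcases lt_or_ge i m with hi | hi
    · exact hdual (.inl (⟨i, hi⟩, ⟨j, hj⟩))
    obtain ⟨i, rfl⟩ := Nat.exists_eq_add_of_le' hi
    rcases lt_or_ge i m with hi | hi
    · simpa [dualGm2, htp] using hdual (.inr (⟨i, hi⟩, ⟨j, hj⟩))
    obtain ⟨i, rfl⟩ := Nat.exists_eq_add_of_le' hi
    simpa [hcorner, htp] using hrel (i + m) j
  have hright (i j : ℕ) : coeffXY (i + m) j f = 0 := by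
    rcases lt_or_ge j m with hj | hj
    · exact hlow (i + m) j hj
    obtain ⟨j, rfl⟩ := Nat.exists_eq_add_of_le' hj
    exact hcorner i j
  refine coeffXY_ext fun i j => ?_
  rw [map_zero]
  rcases lt_or_ge j m with hj | hj
  · exact hlow i j hj
  obtain ⟨j, rfl⟩ := Nat.exists_eq_add_of_le' hj
  simpa [hright, htp] using hrel i j

lemma dualBases_basisGm2_dualGm2 (htp : ∀ a, tp q (a + m) m ≠ 0)
    (hq : ∀ n : ℕ, 2 * m ≤ n → 2 + q * n ≠ 0) :
    Module.DualBases
      (fun s => (⟨basisGm2 q m s, basisGm2_mem_qHarmonicGm2 s⟩ : qHarmonicGm2 q m))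
      (fun s => dualGm2 q m s ∘ₗ (qHarmonicGm2 q m).subtype) where
  eval_same s := (dualGm2_basisGm2 htp s s).trans (if_pos rfl)
  eval_of_ne s t hst := (dualGm2_basisGm2 htp s t).trans (if_neg hst)
  total {f g} hfg := by
    refine Subtype.ext (sub_eq_zero.1 (eq_zero_of_dualGm2_eq_zero (f - g).2 htp hq fun s => ?_))
    simpa [sub_eq_zero] using hfg s

end Harmonic

lemma one_add_mul_natCast_ne_zero {K : Type*} [Field K] {q : K}
    (hq : ∀ a b : ℕ, 1 ≤ a → a ≤ 2 → 2 ≤ b → (a : K) + q * (b : K) ≠ 0) (n : ℕ) :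
    1 + q * n ≠ 0 := by
  rcases lt_trichotomy n 1 with hn | rfl | hn
  · simp [Nat.lt_one_iff.1 hn]
  · intro h
    exact hq 2 2 one_le_two le_rfl le_rfl (by push_cast at h ⊢; linear_combination 2 * h)
  · exact mod_cast hq 1 n le_rfl one_le_two hn

theorem basis_qHarmonic_Gm2_general {K : Type*} [Field K] [CharZero K] (q : K) (m : ℕ)
    (h_one : ∀ n : ℕ, 1 + q * n ≠ 0) (h_two : ∀ n : ℕ, 2 * m ≤ n → 2 + q * n ≠ 0) :
    LinearIndependent K (basisGm2 q m)
    ∧ Submodule.span K (Set.range (basisGm2 q m)) = qHarmonicGm2 q m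
    ∧ Module.finrank K (qHarmonicGm2 q m) = 2 * m ^ 2 := by
  have hdual := dualBases_basisGm2_dualGm2 (m := m)
    (fun a => tp_add_self_ne_zero (h_one a) m) h_two
  have hbasis : basisGm2 q m = (qHarmonicGm2 q m).subtype ∘ hdual.basis := by
    rw [hdual.coe_basis]
    rfl
  rw [hbasis]
  refine ⟨hdual.basis.linearIndependent.map' _ (Submodule.ker_subtype _), ?_, ?_⟩
  · rw [Set.range_comp, ← Submodule.map_span, hdual.basis.span_eq, Submodule.map_subtype_top]
  · rw [Module.finrank_eq_card_basis hdual.basis]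
    simp only [Fintype.card_sum, Fintype.card_prod, Fintype.card_fin]
    ring

/-- For `q ≠ -a/b` with `1 ≤ a ≤ 2 ≤ b`, the `2m²` polynomials of `basisGm2` form a basis
of the `q`-harmonic polynomials for `G(m,2)`; in particular that space has dimension
`2m²`. -/
theorem basis_qHarmonic_Gm2 {K : Type*} [Field K] [CharZero K] (q : K)
    (m : ℕ) (hm : 1 ≤ m)
    (hq : ∀ a b : ℕ, 1 ≤ a → a ≤ 2 → 2 ≤ b → (a : K) + q * (b : K) ≠ 0) :
    LinearIndependent K (basisGm2 (K := K) q m)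
    ∧ Submodule.span K (Set.range (basisGm2 (K := K) q m))
        = LinearMap.ker (D2 q m) ⊓ LinearMap.ker (D2 q (2 * m))
    ∧ Module.finrank K ↥(LinearMap.ker (D2 q m) ⊓ LinearMap.ker (D2 q (2 * m)))
        = 2 * m ^ 2 := by
  exact basis_qHarmonic_Gm2_general q m (one_add_mul_natCast_ne_zero hq) fun n hn =>
    mod_cast hq 2 n one_le_two le_rfl (by lia)
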